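/- arXiv:1705.00055 — 11 statements merged into one kernel-verified Lean document; each statement's English description precedes it below -/
import Mathlib

section
/- Let G be a simple graph, let s, t be vertices and let w_1, …, w_k be a sequence of vertices of G. Then the following are equivalent: (i) there exist walks W_0 from s to w_1, W_1 from w_1 to w_2, …, W_k from w_k to t such that the concatenation of edge lists of W_0, …, W_k has no duplicate edges (i.e., the concatenated route is a trail through the waypoints in order); (ii) there exist paths P_0 from s to w_1, P_1 from w_1 to w_2, …, P_k from w_k to t that are pairwise edge-disjoint. -/
/-- In a simple graph `G`, with source `s`, destination `t` and ordered
waypoints `w 0, …, w (k-1)`, there exist walks between the consecutive endpoints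
`s, w 0, …, w (k-1), t` whose concatenated edge lists have no duplicate edges
iff there exist pairwise edge-disjoint simple paths between those consecutive endpoints. -/
theorem waypoint_trail_iff_edge_disjoint_paths {V : Type*} (G : SimpleGraph V)
    (k : ℕ) (s t : V) (w : Fin k → V)
    (p : Fin (k + 2) → V) (hp : p = Fin.snoc (Fin.cons s w) t) :
    (∃ W : (i : Fin (k + 1)) → G.Walk (p i.castSucc) (p i.succ),
        ((List.ofFn fun i => (W i).edges).flatten).Nodup) ↔
    (∃ P : (i : Fin (k + 1)) → G.Walk (p i.castSucc) (p i.succ),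
        (∀ i, (P i).IsPath) ∧
        ∀ i j, i ≠ j → List.Disjoint (P i).edges (P j).edges) := by
  classical
  have key : ∀ W : (i : Fin (k + 1)) → G.Walk (p i.castSucc) (p i.succ),
      ((List.ofFn fun i => (W i).edges).flatten).Nodup ↔
        (∀ i, (W i).edges.Nodup) ∧
          ∀ i j, i < j → List.Disjoint (W i).edges (W j).edges := by
    intro W
    rw [List.nodup_flatten, List.pairwise_ofFn, List.forall_mem_ofFn_iff]
  constructor
  · rintro ⟨W, hW⟩
    obtain ⟨-, h⟩ := (key W).1 hW
    refine ⟨fun i => (W i).bypass, fun i => (W i).bypass_isPath, ?_⟩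
    intro i j hij e hi hj
    have hi' := (W i).edges_bypass_subset_edges hi
    have hj' := (W j).edges_bypass_subset_edges hj
    rcases lt_or_gt_of_ne hij with hlt | hlt
    · exact h i j hlt hi' hj'
    · exact h j i hlt hj' hi'
  · rintro ⟨P, hP, hd⟩
    exact ⟨P, (key P).2 ⟨fun i => (hP i).isTrail.edges_nodup, fun i j hij => hd i j hij.ne⟩⟩
end

section
/- Let G be a simple graph, let s, t be vertices and let w_1, …, w_k be a sequence of vertices of G (set w_0 = s and w_{k+1} = t). Suppose the family (W_0, …, W_k), where each W_i is a walk from w_i to w_{i+1} and the concatenation of their edge lists has no duplicate edges, has minimum total length (total number of edges) among all such families. Then every W_i is a simple path (has no repeated vertices). -/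
theorem flatten_ofFn_sublist {α : Type*} {n : ℕ} (f g : Fin n → List α)
    (h : ∀ i, (f i).Sublist (g i)) :
    ((List.ofFn f).flatten).Sublist ((List.ofFn g).flatten) := by
  induction n with
  | zero => simp
  | succ n ih =>
    simp only [List.ofFn_succ, List.flatten_cons]
    exact (h 0).append (ih _ _ fun i => h i.succ)

/-- Observation 1 of the paper. If a family of walks between the
consecutive endpoints `s = p 0, w 1, …, w k, t = p (k+1)` whose concatenated edge
lists have no duplicate edges has minimum total length among all such families, then
every walk in the family is a simple path. -/
theorem shortest_waypoint_route_segments_are_paths {V : Type*} (G : SimpleGraph V)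
    (k : ℕ) (s t : V) (w : Fin k → V)
    (p : Fin (k + 2) → V) (hp : p = Fin.snoc (Fin.cons s w) t)
    (W : (i : Fin (k + 1)) → G.Walk (p i.castSucc) (p i.succ))
    (hW : ((List.ofFn fun i => (W i).edges).flatten).Nodup)
    (hmin : ∀ W' : (i : Fin (k + 1)) → G.Walk (p i.castSucc) (p i.succ),
        ((List.ofFn fun i => (W' i).edges).flatten).Nodup →
        (∑ i, (W i).length) ≤ ∑ i, (W' i).length) :
    ∀ i, (W i).IsPath := by
  classical
  have hsub := flatten_ofFn_sublist (fun i => (W i).bypass.edges) (fun i => (W i).edges)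
    (fun i => (W i).edges_bypass_sublist_edges)
  have hle := hmin (fun i => (W i).bypass) (hW.sublist hsub)
  intro i
  have heq : (W i).bypass.length = (W i).length := by
    have h1 : ∑ i, (W i).bypass.length = ∑ i, (W i).length :=
      le_antisymm (Finset.sum_le_sum fun i _ => (W i).length_bypass_le_length) hle
    exact (Finset.sum_eq_sum_iff_of_le fun i _ => (W i).length_bypass_le_length).1 h1 i
      (Finset.mem_univ i)
  rw [← (W i).bypass_eq_self_of_length_le_length_bypass heq.ge]
  exact (W i).bypass_isPath
end

section
/- Let G be a simple graph and let s, t, w be vertices of G. There exists a trail from s to t whose support contains w if and only if there exist a path P from s to w and a path Q from w to t such that P and Q are edge-disjoint. -/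
/-- In a simple graph `G`, there is a trail from `s` to `t` whose support
contains the waypoint `w` iff there are a path from `s` to `w` and a path from `w` to `t`
that are edge-disjoint. -/
theorem trail_through_waypoint_iff_edge_disjoint_paths {V : Type*} (G : SimpleGraph V)
    (s t w : V) :
    (∃ T : G.Walk s t, T.IsTrail ∧ w ∈ T.support) ↔
    (∃ (P : G.Walk s w) (Q : G.Walk w t), P.IsPath ∧ Q.IsPath ∧
      List.Disjoint P.edges Q.edges) := by
  classical
  constructor
  · rintro ⟨T, hT, hw⟩
    rw [← T.take_spec hw, SimpleGraph.Walk.isTrail_def, SimpleGraph.Walk.edges_append] at hT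
    have hd := List.disjoint_of_nodup_append hT
    exact ⟨(T.takeUntil w hw).bypass, (T.dropUntil w hw).bypass,
      SimpleGraph.Walk.bypass_isPath _, SimpleGraph.Walk.bypass_isPath _,
      fun _ h1 h2 => hd (SimpleGraph.Walk.edges_bypass_subset_edges _ h1)
        (SimpleGraph.Walk.edges_bypass_subset_edges _ h2)⟩
  · rintro ⟨P, Q, hP, hQ, hd⟩
    refine ⟨P.append Q, ?_, ?_⟩
    · rw [SimpleGraph.Walk.isTrail_def, SimpleGraph.Walk.edges_append]
      exact List.Nodup.append hP.isTrail.edges_nodup hQ.isTrail.edges_nodup hd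
    · rw [SimpleGraph.Walk.mem_support_append_iff]
      exact Or.inl P.end_mem_support
end

section
/- Let G be a simple graph and let s, w be distinct vertices of G. There exists a closed trail starting and ending at s whose support contains w if and only if there exist two edge-disjoint paths from s to w. -/
/-- In a simple graph `G`, for distinct vertices `s ≠ w`, there is a closed
trail at `s` whose support contains `w` iff there are two edge-disjoint paths from `s` to `w`. -/
theorem closed_trail_through_waypoint_iff_two_edge_disjoint_paths {V : Type*}
    (G : SimpleGraph V) (s w : V) (hsw : s ≠ w) :
    (∃ T : G.Walk s s, T.IsTrail ∧ w ∈ T.support) ↔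
    (∃ P Q : G.Walk s w, P.IsPath ∧ Q.IsPath ∧ List.Disjoint P.edges Q.edges) := by
  classical
  constructor
  · rintro ⟨T, hT, hw⟩
    refine ⟨(T.takeUntil w hw).bypass, (T.dropUntil w hw).reverse.bypass,
      SimpleGraph.Walk.bypass_isPath _, SimpleGraph.Walk.bypass_isPath _, ?_⟩
    have hd : List.Disjoint (T.takeUntil w hw).edges (T.dropUntil w hw).edges :=
      List.disjoint_of_nodup_append <| by
        simpa [← SimpleGraph.Walk.edges_append] using hT.edges_nodup
    intro e h1 h2
    have h3 := SimpleGraph.Walk.edges_bypass_subset_edges _ h1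
    have h4 := SimpleGraph.Walk.edges_bypass_subset_edges _ h2
    rw [SimpleGraph.Walk.edges_reverse, List.mem_reverse] at h4
    exact hd h3 h4
  · rintro ⟨P, Q, hP, hQ, hd⟩
    refine ⟨P.append Q.reverse, ⟨?_⟩, by simp⟩
    rw [SimpleGraph.Walk.edges_append, SimpleGraph.Walk.edges_reverse]
    refine List.Nodup.append hP.isTrail.edges_nodup
      (List.nodup_reverse.mpr hQ.isTrail.edges_nodup) ?_
    intro e h1 h2
    exact hd h1 (List.mem_reverse.mp h2)
end

section
/- Let G be a simple graph on a vertex type V, let s, t, w be vertices of G with s ≠ t, and let G' be the simple graph on V ⊕ Unit in which two old vertices are adjacent exactly when they are adjacent in G, and the new vertex x (the element of Unit) is adjacent exactly to s and to t. Then there exist two edge-disjoint paths from x to w in G' if and only if there exist a path from s to w and a path from t to w in G that are edge-disjoint. -/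
open SimpleGraph in
theorem lift_walk_aux {V : Type*} {G : SimpleGraph V} {G' : SimpleGraph (V ⊕ Unit)}
    (f : G →g G') (hf : ∀ a, f a = Sum.inl a)
    (hG'old : ∀ a b : V, G'.Adj (Sum.inl a) (Sum.inl b) ↔ G.Adj a b)
    {x y : V ⊕ Unit} (p : G'.Walk x y) :
    ∀ a b : V, x = Sum.inl a → y = Sum.inl b → Sum.inr () ∉ p.support →
      ∃ q : G.Walk a b, p.support = q.support.map f ∧ p.edges = q.edges.map (Sym2.map f) := by
  induction p with
  | nil =>
    rintro a b rfl hb -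
    obtain rfl := Sum.inl.inj hb
    exact ⟨Walk.nil, by simp [hf], by simp⟩
  | @cons u v z h p ih =>
    rintro a b rfl rfl hn
    rcases v with c | ⟨⟩
    · obtain ⟨q, hq, he⟩ := ih c b rfl rfl (by simp at hn; exact hn)
      exact ⟨Walk.cons ((hG'old a c).1 h) q, by simp [hq, hf], by simp [he, hf]⟩
    · simp at hn

open SimpleGraph in
theorem first_step_aux {V : Type*} {G : SimpleGraph V} {s t w : V}
    {G' : SimpleGraph (V ⊕ Unit)}
    (f : G →g G') (hf : ∀ a, f a = Sum.inl a)
    (hG'old : ∀ a b : V, G'.Adj (Sum.inl a) (Sum.inl b) ↔ G.Adj a b)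
    (hG'new : ∀ a : V, G'.Adj (Sum.inr ()) (Sum.inl a) ↔ (a = s ∨ a = t))
    (hG'loop : ¬ G'.Adj (Sum.inr ()) (Sum.inr ()))
    (P : G'.Walk (Sum.inr ()) (Sum.inl w)) (hP : P.IsPath) :
    ∃ a, (a = s ∨ a = t) ∧ ∃ q : G.Walk a w, q.IsPath ∧
      P.edges = s(Sum.inr (), Sum.inl a) :: q.edges.map (Sym2.map f) := by
  cases P with
  | @cons _ v _ h p =>
    rcases v with c | ⟨⟩
    · rw [Walk.cons_isPath_iff] at hP
      obtain ⟨q, hq, he⟩ := lift_walk_aux f hf hG'old p c w rfl rfl hP.2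
      refine ⟨c, (hG'new c).1 h, q, ?_, by simp [he]⟩
      have := hP.1.support_nodup
      rw [hq] at this
      exact Walk.IsPath.mk' this.of_map
    · exact absurd h hG'loop

/-- super-source construction of Theorem 1. Let `G'` be the graph on
`V ⊕ Unit` in which old vertices are adjacent exactly as in `G` and the new vertex
`Sum.inr ()` is adjacent exactly to `s` and `t` (with `s ≠ t`). Then there are two
edge-disjoint paths from the new vertex to `w` in `G'` iff there are a path from `s`
to `w` and a path from `t` to `w` in `G` that are edge-disjoint. -/
theorem super_source_two_disjoint_paths_iff {V : Type*} (G : SimpleGraph V)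
    (s t w : V) (hst : s ≠ t)
    (G' : SimpleGraph (V ⊕ Unit))
    (hG'old : ∀ a b : V, G'.Adj (Sum.inl a) (Sum.inl b) ↔ G.Adj a b)
    (hG'new : ∀ a : V, G'.Adj (Sum.inr ()) (Sum.inl a) ↔ (a = s ∨ a = t))
    (hG'loop : ¬ G'.Adj (Sum.inr ()) (Sum.inr ())) :
    (∃ P Q : G'.Walk (Sum.inr ()) (Sum.inl w), P.IsPath ∧ Q.IsPath ∧
      List.Disjoint P.edges Q.edges) ↔
    (∃ (P : G.Walk s w) (Q : G.Walk t w), P.IsPath ∧ Q.IsPath ∧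
      List.Disjoint P.edges Q.edges) := by
  let f : G →g G' := ⟨Sum.inl, fun {a b} h => (hG'old a b).2 h⟩
  have hf : ∀ a, f a = Sum.inl a := fun _ => rfl
  have hinj : Function.Injective f := Sum.inl_injective
  constructor
  · rintro ⟨P, Q, hP, hQ, hd⟩
    obtain ⟨a, ha, p, hp, hpe⟩ := first_step_aux f hf hG'old hG'new hG'loop P hP
    obtain ⟨b, hb, q, hq, hqe⟩ := first_step_aux f hf hG'old hG'new hG'loop Q hQ
    rw [hpe, hqe] at hd
    have hpq : List.Disjoint p.edges q.edges := fun e h1 h2 =>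
      hd (List.mem_cons_of_mem _ (List.mem_map_of_mem h1))
        (List.mem_cons_of_mem _ (List.mem_map_of_mem h2))
    have hab : a ≠ b := by
      rintro rfl
      exact hd List.mem_cons_self List.mem_cons_self
    rcases ha with rfl | rfl <;> rcases hb with rfl | rfl
    · exact absurd rfl hab
    · exact ⟨p, q, hp, hq, hpq⟩
    · exact ⟨q, p, hq, hp, hpq.symm⟩
    · exact absurd rfl hab
  · rintro ⟨P, Q, hP, hQ, hd⟩
    have key : ∀ (a : V) (p : G.Walk a w), Sum.inr () ∉ (p.map f).support := by
      intro a p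
      simp [hf]
    have key2 : ∀ (a c : V) (p : G.Walk a w), s(Sum.inr (), Sum.inl c) ∉ (p.map f).edges :=
      fun a c p h => key a p (SimpleGraph.Walk.fst_mem_support_of_mem_edges _ h)
    refine ⟨.cons ((hG'new s).2 (Or.inl rfl)) (P.map f),
      .cons ((hG'new t).2 (Or.inr rfl)) (Q.map f), ?_, ?_, ?_⟩
    · exact (SimpleGraph.Walk.cons_isPath_iff _ _).2
        ⟨SimpleGraph.Walk.map_isPath_of_injective hinj hP, key _ _⟩
    · exact (SimpleGraph.Walk.cons_isPath_iff _ _).2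
        ⟨SimpleGraph.Walk.map_isPath_of_injective hinj hQ, key _ _⟩
    · intro e h1 h2
      rw [SimpleGraph.Walk.edges_cons, List.mem_cons] at h1 h2
      rcases h1 with rfl | h1 <;> rcases h2 with h2 | h2
      · simp [hf, hst] at h2
      · exact key2 _ _ _ h2
      · subst h2
        exact key2 _ _ _ h1
      · rw [SimpleGraph.Walk.edges_map, List.mem_map] at h1 h2
        obtain ⟨e1, h1, rfl⟩ := h1
        obtain ⟨e2, h2, he⟩ := h2
        obtain rfl := Sym2.map.injective hinj he
        exact hd h1 h2
end

section
/- Let r : V → V → Prop be a digraph, let s, t be vertices and let w_1, …, w_k be a sequence of vertices. Then the following are equivalent: (i) there exist directed walks W_0 from s to w_1, W_1 from w_1 to w_2, …, W_k from w_k to t such that the concatenation of their arc lists has no duplicate arcs; (ii) there exist directed paths P_0 from s to w_1, P_1 from w_1 to w_2, …, P_k from w_k to t that are pairwise arc-disjoint. -/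
/-- A directed walk in the digraph `r` from `a` to `b`: a nonempty list of vertices
starting at `a`, ending at `b`, with `r` holding between consecutive vertices. -/
def IsDiwalk {V : Type*} (r : V → V → Prop) (a b : V) (l : List V) : Prop :=
  l ≠ [] ∧ l.head? = some a ∧ l.getLast? = some b ∧ l.Chain' r

/-- The arcs of a directed walk: the list of ordered pairs of consecutive vertices. -/
def arcs {V : Type*} (l : List V) : List (V × V) := l.zip l.tail

/-- A directed path: a directed walk with no repeated vertices. -/
def IsDipath {V : Type*} (r : V → V → Prop) (a b : V) (l : List V) : Prop :=
  IsDiwalk r a b l ∧ l.Nodup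

theorem aux_arcs_suffix {V : Type*} (u : List V) (m : List V) : arcs m ⊆ arcs (u ++ m) := by
  induction u with
  | nil => simp
  | cons x u ih =>
    refine List.Subset.trans ih ?_
    intro e he
    rw [List.cons_append]
    cases h : u ++ m with
    | nil => rw [h] at he; simp [arcs] at he
    | cons y l =>
      rw [h] at he
      exact List.mem_cons_of_mem (x, y) he

theorem aux_arcs_nodup {V : Type*} (l : List V) (h : l.Nodup) : (arcs l).Nodup := by
  induction l with
  | nil => simp [arcs]
  | cons x l ih =>
    cases l with
    | nil => simp [arcs]
    | cons y l =>
      have h2 := List.nodup_cons.1 h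
      have e : arcs (x :: y :: l) = (x, y) :: arcs (y :: l) := rfl
      rw [e]
      refine List.nodup_cons.2 ⟨fun hm => h2.1 (List.of_mem_zip hm).1, ih h2.2⟩

theorem aux_path {V : Type*} (r : V → V → Prop) (b : V) (l : List V) :
    ∀ a, IsDiwalk r a b l → ∃ q, IsDipath r a b q ∧ arcs q ⊆ arcs l := by
  induction l with
  | nil => intro a h; exact absurd rfl h.1
  | cons x l ih =>
    intro a h
    obtain ⟨h0, h1, h2, h3⟩ := h
    obtain rfl : x = a := by simpa using h1
    cases l with
    | nil => exact ⟨[x], ⟨⟨h0, h1, h2, h3⟩, by simp⟩, List.Subset.refl _⟩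
    | cons y l =>
      have h3' := List.isChain_cons_cons.1 h3
      obtain ⟨q, ⟨⟨q0, q1, q2, q3⟩, qn⟩, qs⟩ :=
        ih y ⟨by simp, by simp, by simpa [List.getLast?_cons_cons] using h2, h3'.2⟩
      have e : arcs (x :: y :: l) = (x, y) :: arcs (y :: l) := rfl
      by_cases hx : x ∈ q
      · obtain ⟨u, v, rfl⟩ := List.append_of_mem hx
        refine ⟨x :: v, ⟨⟨by simp, by simp, ?_, ?_⟩, ?_⟩, ?_⟩
        · simpa [List.getLast?_append] using q2
        · exact List.IsChain.right_of_append q3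
        · exact (List.nodup_append.1 qn).2.1
        · rw [e]
          exact fun z hz => List.mem_cons_of_mem _ (qs (aux_arcs_suffix u _ hz))
      · cases q with
        | nil => exact absurd rfl q0
        | cons z q =>
          obtain rfl : z = y := by simpa using q1
          refine ⟨x :: z :: q, ⟨⟨by simp, by simp, ?_, ?_⟩, ?_⟩, ?_⟩
          · simpa [List.getLast?_cons_cons] using q2
          · exact List.isChain_cons_cons.2 ⟨h3'.1, q3⟩
          · exact List.nodup_cons.2 ⟨hx, qn⟩
          · exact List.cons_subset_cons _ qs

/-- In a digraph `r`, with source `s`, destination `t` and ordered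
waypoints `w 0, …, w (k-1)`, there exist directed walks between the consecutive
endpoints `s, w 0, …, w (k-1), t` whose concatenated arc lists have no duplicate arcs
iff there exist pairwise arc-disjoint directed paths between those consecutive endpoints. -/
theorem directed_waypoint_trail_iff_arc_disjoint_paths {V : Type*}
    (r : V → V → Prop) (k : ℕ) (s t : V) (w : Fin k → V)
    (p : Fin (k + 2) → V) (hp : p = Fin.snoc (Fin.cons s w) t) :
    (∃ W : Fin (k + 1) → List V,
        (∀ i, IsDiwalk r (p i.castSucc) (p i.succ) (W i)) ∧
        ((List.ofFn fun i => arcs (W i)).flatten).Nodup) ↔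
    (∃ P : Fin (k + 1) → List V,
        (∀ i, IsDipath r (p i.castSucc) (p i.succ) (P i)) ∧
        ∀ i j, i ≠ j → List.Disjoint (arcs (P i)) (arcs (P j))) := by
  constructor
  · rintro ⟨W, hW, hn⟩
    choose P hP hs using fun i => aux_path r _ (W i) _ (hW i)
    refine ⟨P, hP, ?_⟩
    have hd := (List.nodup_flatten.1 hn).2
    rw [List.pairwise_ofFn] at hd
    intro i j hij z hz hz'
    rcases lt_or_gt_of_ne hij with h | h
    · exact hd h (hs i hz) (hs j hz')
    · exact hd h (hs j hz') (hs i hz)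
  · rintro ⟨P, hP, hd⟩
    refine ⟨P, fun i => (hP i).1, List.nodup_flatten.2 ⟨?_, ?_⟩⟩
    · intro l hl
      obtain ⟨i, rfl⟩ := (List.mem_ofFn' _ _).1 hl
      exact aux_arcs_nodup _ (hP i).2
    · rw [List.pairwise_ofFn]
      exact fun i j h => hd i j h.ne
end

section
/- Let G be a simple graph that is locally finite at a vertex v, and let W_1, …, W_m be pairwise edge-disjoint trails such that each W_j is a trail from a_j to b_j, has v in its support, and satisfies v ≠ a_j and v ≠ b_j. Then 2·m ≤ deg(v), the degree of v in G. -/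
/-- the counting argument behind the Claim in Theorem 8. If
`W 0, …, W (m-1)` are pairwise edge-disjoint trails, each containing the vertex `v`
in its support but having both endpoints different from `v`, then `2 * m ≤ deg v`. -/
theorem edge_disjoint_trails_through_vertex_degree_bound {V : Type*}
    (G : SimpleGraph V) (v : V) [Fintype (G.neighborSet v)]
    (m : ℕ) (a b : Fin m → V)
    (W : (j : Fin m) → G.Walk (a j) (b j))
    (htrail : ∀ j, (W j).IsTrail)
    (hsupp : ∀ j, v ∈ (W j).support)
    (hva : ∀ j, v ≠ a j) (hvb : ∀ j, v ≠ b j)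
    (hdisj : ∀ i j, i ≠ j → List.Disjoint (W i).edges (W j).edges) :
    2 * m ≤ G.degree v := by
  classical
  have key : ∀ j, ∃ x y : V, x ≠ y ∧ s(v, x) ∈ (W j).edges ∧ s(v, y) ∈ (W j).edges := by
    intro j
    have h1 : ¬ ((W j).takeUntil v (hsupp j)).Nil := fun h => hva j h.eq.symm
    have h2 : ¬ ((W j).dropUntil v (hsupp j)).Nil := fun h => hvb j h.eq
    have m1 := SimpleGraph.Walk.mk_penultimate_end_mem_edges h1
    have m2 := SimpleGraph.Walk.mk_start_snd_mem_edges h2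
    rw [Sym2.eq_swap] at m1
    refine ⟨_, _, fun h => ?_, (W j).edges_takeUntil_subset_edges (hsupp j) m1,
      (W j).edges_dropUntil_subset_edges (hsupp j) m2⟩
    rw [h] at m1
    exact (htrail j).disjoint_edges_takeUntil_dropUntil (hsupp j) m1 m2
  choose x y hxy hx hy using key
  let g : Fin m × Bool → V := fun p => if p.2 then x p.1 else y p.1
  have hg : ∀ p, s(v, g p) ∈ (W p.1).edges := by
    rintro ⟨j, _ | _⟩
    · exact hy j
    · exact hx j
  let f : Fin m × Bool → G.neighborSet v :=
    fun p => ⟨g p, (W p.1).adj_of_mem_edges (hg p)⟩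
  have hf : Function.Injective f := by
    intro p q h
    have h' : g p = g q := congrArg Subtype.val h
    have hpq : p.1 = q.1 := by
      by_contra hne
      have hq := hg q
      rw [← h'] at hq
      exact hdisj _ _ hne (hg p) hq
    obtain ⟨i, c⟩ := p
    obtain ⟨j, d⟩ := q
    obtain rfl : i = j := hpq
    cases c <;> cases d
    · rfl
    · exact absurd h'.symm (hxy i)
    · exact absurd h' (hxy i)
    · rfl
  have := Fintype.card_le_of_injective f hf
  rw [SimpleGraph.card_neighborSet_eq_degree] at this
  simp at this
  omega
end

section
/- Let G be a simple graph that is locally finite at a vertex v, and let W_1, …, W_m be pairwise edge-disjoint trails such that each W_j is a trail from a_j to b_j, has v in its support, and satisfies v ≠ a_j and v ≠ b_j. If deg(v) = 2·m, then every edge of G incident to v occurs in the edge list of some W_j. -/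
theorem exists_edge_at_end {V : Type*} {G : SimpleGraph V} {x v : V} (p : G.Walk x v)
    (h : v ≠ x) : ∃ e ∈ p.edges, v ∈ e := by
  induction p with
  | nil => exact absurd rfl h
  | @cons u w z hadj q ih =>
    by_cases hz : z = w
    · subst hz
      exact ⟨s(u, z), by simp, by simp⟩
    · obtain ⟨e, he, hv⟩ := ih hz
      exact ⟨e, by simp [he], hv⟩

/-- the Claim in the proof of Theorem 8. If `W 0, …, W (m-1)` are
pairwise edge-disjoint trails, each containing the vertex `v` in its support but having
both endpoints different from `v`, and `deg v = 2 * m`, then every edge of `G` incident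
to `v` occurs on one of the trails. -/
theorem edge_disjoint_trails_saturate_incident_edges {V : Type*}
    (G : SimpleGraph V) (v : V) [Fintype (G.neighborSet v)]
    (m : ℕ) (a b : Fin m → V)
    (W : (j : Fin m) → G.Walk (a j) (b j))
    (htrail : ∀ j, (W j).IsTrail)
    (hsupp : ∀ j, v ∈ (W j).support)
    (hva : ∀ j, v ≠ a j) (hvb : ∀ j, v ≠ b j)
    (hdisj : ∀ i j, i ≠ j → List.Disjoint (W i).edges (W j).edges)
    (hdeg : G.degree v = 2 * m) :
    ∀ e ∈ G.incidenceSet v, ∃ j, e ∈ (W j).edges := by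
  classical
  have key : ∀ j, ∃ f : Bool → Sym2 V, Function.Injective f ∧
      ∀ c, f c ∈ (W j).edges ∧ v ∈ f c := by
    intro j
    obtain ⟨e, he, hve⟩ := exists_edge_at_end ((W j).takeUntil v (hsupp j)) (hva j)
    obtain ⟨e', he', hve'⟩ := exists_edge_at_end ((W j).dropUntil v (hsupp j)).reverse (hvb j)
    rw [SimpleGraph.Walk.edges_reverse, List.mem_reverse] at he'
    have hne : e ≠ e' := by
      rintro rfl
      exact (htrail j).disjoint_edges_takeUntil_dropUntil (hsupp j) he he'
    have h1 := (W j).edges_takeUntil_subset (hsupp j) he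
    have h2 := (W j).edges_dropUntil_subset (hsupp j) he'
    refine ⟨fun c => if c then e else e', ?_, ?_⟩
    · intro c d
      cases c <;> cases d <;> simp [hne, hne.symm]
    · intro c
      cases c <;> simp [h1, h2, hve, hve']
  choose f hinj hf using key
  have hI : Function.Injective (fun x : Fin m × Bool => f x.1 x.2) := by
    rintro ⟨i, c⟩ ⟨j, d⟩ h
    simp only at h
    by_cases hij : i = j
    · subst hij
      rw [hinj i h]
    · exact absurd (h ▸ (hf j d).1) (hdisj i j hij (hf i c).1)
  have heq : Finset.univ.image (fun x : Fin m × Bool => f x.1 x.2) = G.incidenceFinset v := by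
    apply Finset.eq_of_subset_of_card_le
    · intro e he
      obtain ⟨x, -, rfl⟩ := Finset.mem_image.1 he
      rw [SimpleGraph.mem_incidenceFinset]
      exact ⟨(W x.1).edges_subset_edgeSet (hf x.1 x.2).1, (hf x.1 x.2).2⟩
    · rw [SimpleGraph.card_incidenceFinset_eq_degree, hdeg, Finset.card_image_of_injective _ hI]
      simp [mul_comm]
  intro e he
  rw [← SimpleGraph.mem_incidenceFinset, ← heq] at he
  obtain ⟨x, -, rfl⟩ := Finset.mem_image.1 he
  exact ⟨x.1, (hf x.1 x.2).1⟩
end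

section
/- Let G be a simple graph on a vertex type V, let k ≥ 1, and let (s_1, t_1), …, (s_k, t_k) be terminal pairs in V such that the 2(k−1) vertices t_1, …, t_{k−1}, s_2, …, s_k are pairwise distinct. Let G' be the simple graph on V ⊕ Unit in which two old vertices are adjacent exactly when they are adjacent in G, and the new vertex v (the element of Unit) is adjacent exactly to t_1, …, t_{k−1} and s_2, …, s_k. Then the following are equivalent: (i) there exist paths in G' — Q_i from s_i to t_i for i = 1, …, k, A_i from t_i to v for i = 1, …, k−1, and B_i from v to s_{i+1} for i = 1, …, k−1 — that are pairwise edge-disjoint (realizing the ordered waypoint sequence s_1, t_1, v, s_2, t_2, v, …, s_k, t_k); (ii) there exist pairwise edge-disjoint paths P_1, …, P_k in G with P_i from s_i to t_i. -/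
theorem hub_lift_aux {V : Type*} (G : SimpleGraph V) (G' : SimpleGraph (V ⊕ Unit))
    (f : G →g G') (hf : ∀ a, f a = Sum.inl a)
    (hG'old : ∀ a b : V, G'.Adj (Sum.inl a) (Sum.inl b) ↔ G.Adj a b)
    {u v : V ⊕ Unit} (p : G'.Walk u v) :
    (∀ w, s(Sum.inr (), w) ∉ p.edges) → ∀ a b : V, u = Sum.inl a → v = Sum.inl b →
    ∃ q : G.Walk a b, q.support.map Sum.inl = p.support ∧
      q.edges.map (Sym2.map Sum.inl) = p.edges := by
  induction p with
  | nil =>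
    rintro - a b rfl h
    obtain rfl := Sum.inl_injective h
    exact ⟨SimpleGraph.Walk.nil, by simp, by simp⟩
  | @cons u c v h p ih =>
    rintro hp a b rfl rfl
    rcases c with c | ⟨⟩
    · obtain ⟨q, h1, h2⟩ := ih (fun w hw => hp w (by simp [hw])) c b rfl rfl
      exact ⟨SimpleGraph.Walk.cons ((hG'old _ _).1 h) q, by simp [h1], by simp [h2]⟩
    · exact absurd (by simp [Sym2.eq_swap]) (hp (Sum.inl a))

theorem hub_first_edge {W : Type*} (G : SimpleGraph W) {u v : W} (p : G.Walk u v)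
    (h : u ≠ v) : ∃ w, G.Adj u w ∧ s(u, w) ∈ p.edges := by
  cases p with
  | nil => exact absurd rfl h
  | cons h p => exact ⟨_, h, by simp⟩

/-- correctness of the hub-vertex reduction used in Theorem 8.
Let `(s i, t i)` for `i : Fin (n+1)` be terminal pairs (so `k = n + 1 ≥ 1`) such that
the `2n` intermediate terminals `t 0, …, t (n-1), s 1, …, s n` are pairwise distinct,
and let `G'` on `V ⊕ Unit` agree with `G` on old vertices while the new hub vertex
`Sum.inr ()` is adjacent exactly to these intermediate terminals. Then the ordered
waypoint sequence `s 0, t 0, hub, s 1, t 1, hub, …, s n, t n` is realizable by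
pairwise edge-disjoint paths in `G'` iff there are pairwise edge-disjoint paths
`P i : s i → t i` in `G`. -/
theorem hub_waypoint_reduction_iff_edge_disjoint_paths {V : Type*}
    (G : SimpleGraph V) (n : ℕ) (s t : Fin (n + 1) → V)
    (hdist : Function.Injective
      (Sum.elim (fun i : Fin n => t i.castSucc) (fun i : Fin n => s i.succ)))
    (G' : SimpleGraph (V ⊕ Unit))
    (hG'old : ∀ a b : V, G'.Adj (Sum.inl a) (Sum.inl b) ↔ G.Adj a b)
    (hG'hub : ∀ a : V, G'.Adj (Sum.inr ()) (Sum.inl a) ↔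
      (∃ i : Fin n, a = t i.castSucc ∨ a = s i.succ))
    (hG'loop : ¬ G'.Adj (Sum.inr ()) (Sum.inr ())) :
    (∃ (Q : (i : Fin (n + 1)) → G'.Walk (Sum.inl (s i)) (Sum.inl (t i)))
       (A : (i : Fin n) → G'.Walk (Sum.inl (t i.castSucc)) (Sum.inr ()))
       (B : (i : Fin n) → G'.Walk (Sum.inr ()) (Sum.inl (s i.succ))),
       (∀ i, (Q i).IsPath) ∧ (∀ i, (A i).IsPath) ∧ (∀ i, (B i).IsPath) ∧
       (∀ x y : Fin (n + 1) ⊕ (Fin n ⊕ Fin n), x ≠ y →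
         List.Disjoint
           (Sum.elim (fun i => (Q i).edges)
             (Sum.elim (fun i => (A i).edges) (fun i => (B i).edges)) x)
           (Sum.elim (fun i => (Q i).edges)
             (Sum.elim (fun i => (A i).edges) (fun i => (B i).edges)) y))) ↔
    (∃ P : (i : Fin (n + 1)) → G.Walk (s i) (t i),
       (∀ i, (P i).IsPath) ∧
       ∀ i j, i ≠ j → List.Disjoint (P i).edges (P j).edges) := by
  have hterm : ∀ w, G'.Adj (Sum.inr ()) w → ∃ y : Fin n ⊕ Fin n, w = Sum.inl
      (Sum.elim (fun i : Fin n => t i.castSucc) (fun i : Fin n => s i.succ) y) := by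
    rintro (a | ⟨⟩) h
    · obtain ⟨i, rfl | rfl⟩ := (hG'hub a).1 h
      · exact ⟨Sum.inl i, rfl⟩
      · exact ⟨Sum.inr i, rfl⟩
    · exact absurd h hG'loop
  let f : G →g G' := ⟨Sum.inl, fun h => (hG'old _ _).2 h⟩
  constructor
  · rintro ⟨Q, A, B, hQ, hA, hB, hd⟩
    have key : ∀ x : Fin n ⊕ Fin n, ∃ y : Fin n ⊕ Fin n, s(Sum.inr (), Sum.inl
        (Sum.elim (fun i : Fin n => t i.castSucc) (fun i : Fin n => s i.succ) y)) ∈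
        (Sum.elim (fun i => (A i).edges) (fun i => (B i).edges) x) := by
      rintro (i | i)
      · obtain ⟨w, h1, h2⟩ := hub_first_edge G' (A i).reverse (by simp)
        obtain ⟨y, rfl⟩ := hterm w h1
        exact ⟨y, by simpa using h2⟩
      · obtain ⟨w, h1, h2⟩ := hub_first_edge G' (B i) (by simp)
        obtain ⟨y, rfl⟩ := hterm w h1
        exact ⟨y, by simpa using h2⟩
    choose g hg using key
    have ginj : Function.Injective g := by
      intro x y hxy
      by_contra hne
      have := hg y
      rw [← hxy] at this
      exact hd (Sum.inr x) (Sum.inr y) (by simpa using hne) (hg x) this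
    have gsurj : Function.Surjective g := Finite.injective_iff_surjective.1 ginj
    have hQh : ∀ i w, s(Sum.inr (), w) ∉ (Q i).edges := by
      intro i w hw
      obtain ⟨y, rfl⟩ := hterm w ((Q i).adj_of_mem_edges hw)
      obtain ⟨x, rfl⟩ := gsurj y
      exact hd (Sum.inl i) (Sum.inr x) (by simp) hw (hg x)
    have hl := fun i => hub_lift_aux G G' f (fun _ => rfl) hG'old (Q i) (hQh i) _ _ rfl rfl
    choose P hP1 hP2 using hl
    refine ⟨P, fun i => ?_, fun i j hij e he he' => ?_⟩
    · have := (hQ i).support_nodup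
      rw [← hP1] at this
      exact (SimpleGraph.Walk.isPath_def _).2 this.of_map
    · refine hd (Sum.inl i) (Sum.inl j) (by simpa using hij) (a := Sym2.map Sum.inl e) ?_ ?_
      · simp only [Sum.elim_inl, ← hP2]
        exact List.mem_map_of_mem he
      · simp only [Sum.elim_inl, ← hP2]
        exact List.mem_map_of_mem he'
  · rintro ⟨P, hP, hd⟩
    have hA : ∀ i : Fin n, G'.Adj (Sum.inl (t i.castSucc)) (Sum.inr ()) :=
      fun i => ((hG'hub _).2 ⟨i, Or.inl rfl⟩).symm
    have hB : ∀ i : Fin n, G'.Adj (Sum.inr ()) (Sum.inl (s i.succ)) :=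
      fun i => (hG'hub _).2 ⟨i, Or.inr rfl⟩
    refine ⟨fun i => (P i).map f, fun i => (hA i).toWalk, fun i => (hB i).toWalk,
      fun i => SimpleGraph.Walk.map_isPath_of_injective Sum.inl_injective (hP i),
      fun i => by simp, fun i => by simp, ?_⟩
    have hQe : ∀ i e, e ∈ ((P i).map f).edges → ∃ e' ∈ (P i).edges, Sym2.map Sum.inl e' = e := by
      intro i e he
      rw [SimpleGraph.Walk.edges_map] at he
      exact List.mem_map.1 he
    have hQh : ∀ i w, s(Sum.inr (), w) ∉ ((P i).map f).edges := by
      intro i w hw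
      obtain ⟨e', -, h⟩ := hQe i _ hw
      induction e' with
      | _ a b => simp at h
    have hAB : ∀ (x : Fin n ⊕ Fin n) e,
        e ∈ (Sum.elim (fun i => (hA i).toWalk.edges) (fun i => (hB i).toWalk.edges) x) →
        e = s(Sum.inr (), Sum.inl
        (Sum.elim (fun i : Fin n => t i.castSucc) (fun i : Fin n => s i.succ) x)) := by
      rintro (i | i) e he
      · simpa [Sym2.eq_swap] using he
      · simpa using he
    rintro (i | x) (j | y) hne e he he'
    · obtain ⟨e1, h1, rfl⟩ := hQe i e he
      obtain ⟨e2, h2, h3⟩ := hQe j _ he'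
      obtain rfl := Sym2.map.injective Sum.inl_injective h3
      exact hd i j (by simpa using hne) h1 h2
    · rw [hAB y e he'] at he
      exact hQh _ _ he
    · rw [hAB x e he] at he'
      exact hQh _ _ he'
    · have h := (hAB x e he).symm.trans (hAB y e he')
      have h2 := Sum.inl_injective (Sym2.congr_right.1 h)
      exact hne (congrArg Sum.inr (hdist h2))
end

section
/- Let D be the digraph on a four-element vertex type with distinct vertices u, v, x, y whose arcs are exactly u→x, v→x, x→y, y→u, and y→v. Then: (i) there exists a directed path from u to v and a directed path from v to u in D; and (ii) there do not exist a directed walk from u to v and a directed walk from v to u in D that are arc-disjoint (every directed walk from u to v and every directed walk from v to u must use the arc x→y). -/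
/-- the gadget of Figure 5. In the digraph on the four distinct
vertices `u, v, x, y` with arcs exactly `u→x, v→x, x→y, y→u, y→v`, there are a directed
path from `u` to `v` and one from `v` to `u`, but no arc-disjoint pair of a directed
walk from `u` to `v` and a directed walk from `v` to `u` exists, since every directed
walk from `u` to `v`, and every one from `v` to `u`, must use the arc `x→y`. -/
theorem gadget_one_direction_only {V : Type*} (u v x y : V) (r : V → V → Prop)
    (hall : ∀ z : V, z = u ∨ z = v ∨ z = x ∨ z = y)
    (huv : u ≠ v) (hux : u ≠ x) (huy : u ≠ y)
    (hvx : v ≠ x) (hvy : v ≠ y) (hxy : x ≠ y)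
    (hr : ∀ a b, r a b ↔ ((a = u ∧ b = x) ∨ (a = v ∧ b = x) ∨ (a = x ∧ b = y) ∨
      (a = y ∧ b = u) ∨ (a = y ∧ b = v))) :
    ((∃ P, IsDipath r u v P) ∧ (∃ Q, IsDipath r v u Q)) ∧
    (∀ W, IsDiwalk r u v W → (x, y) ∈ arcs W) ∧
    (∀ W, IsDiwalk r v u W → (x, y) ∈ arcs W) ∧
    ¬ (∃ W W', IsDiwalk r u v W ∧ IsDiwalk r v u W' ∧
        List.Disjoint (arcs W) (arcs W')) := by
  have key : ∀ a b W, (a = u ∨ a = v) → (b = u ∨ b = v) → a ≠ b → IsDiwalk r a b W →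
      (x, y) ∈ arcs W := by
    rintro a b W ha hb hab ⟨h0, h1, h2, h3⟩
    match W, h0, h1, h2, h3 with
    | [p], _, h1, h2, _ =>
      simp at h1 h2
      exact absurd (h1.symm.trans h2) hab
    | [p, q], _, h1, h2, h3 =>
      simp [List.Chain'] at h1 h2 h3
      rw [hr] at h3
      grind
    | p :: q :: s :: t, _, h1, _, h3 =>
      simp [List.Chain'] at h1 h3
      obtain ⟨h4, h5, -⟩ := h3
      rw [hr] at h4 h5
      have hq : q = x := by grind
      have hs : s = y := by grind
      simp [arcs, hq, hs]
  have k1 : ∀ W, IsDiwalk r u v W → (x, y) ∈ arcs W :=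
    fun W => key u v W (Or.inl rfl) (Or.inr rfl) huv
  have k2 : ∀ W, IsDiwalk r v u W → (x, y) ∈ arcs W :=
    fun W => key v u W (Or.inr rfl) (Or.inl rfl) huv.symm
  refine ⟨⟨⟨[u, x, y, v], ?_⟩, ⟨[v, x, y, u], ?_⟩⟩, k1, k2, ?_⟩
  · simp [IsDipath, IsDiwalk, List.Chain', *, hvx.symm, hvy.symm]
  · simp [IsDipath, IsDiwalk, List.Chain', hr, *, huv.symm, hux.symm, huy.symm]
  · rintro ⟨W, W', h, h', hd⟩
    exact hd (k1 W h) (k2 W' h')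
end

section
/- Let G be the simple graph on eight distinct vertices s, u, w, t, v_1, v_2, v_3, v_4 whose edges are exactly {s,u}, {u,w}, {u,t}, {v_3,v_2}, {v_2,v_1}, {v_1,w}, {v_3,s}, {s,v_4}, {v_4,t}. Then: (i) there exist edge-disjoint paths P from s to w and Q from w to t with total length |P| + |Q| = 6; (ii) every pair of edge-disjoint paths P from s to w and Q from w to t satisfies |P| + |Q| ≥ 6; and (iii) the unique shortest path from s to w is s, u, w of length 2, and every path Q from w to t that is edge-disjoint from this path has length at least 6, so every edge-disjoint pair (P, Q) in which P is a shortest s–w path has total length at least 8. -/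
set_option maxHeartbeats 4000000

theorem walk_pot {V : Type*} {G : SimpleGraph V} (f : V → ℕ) (B : Sym2 V → Prop)
    (hf : ∀ a b, G.Adj a b → ¬ B s(a, b) → f b ≤ f a + 1) {a b : V} (P : G.Walk a b)
    (hP : ∀ e ∈ P.edges, ¬ B e) : f b ≤ f a + P.length := by
  induction P with
  | nil => simp
  | cons h p ih =>
    simp only [SimpleGraph.Walk.edges_cons, List.mem_cons, forall_eq_or_imp] at hP
    have h1 := ih hP.2
    have h2 := hf _ _ h hP.1
    simp only [SimpleGraph.Walk.length_cons]
    omega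

/-- the example of Figure 2: greedy fails, segments must be jointly
optimized. In the simple graph on the eight distinct vertices
`s, u, w, t, v₁, v₂, v₃, v₄` with edges exactly
`{s,u}, {u,w}, {u,t}, {v₃,v₂}, {v₂,v₁}, {v₁,w}, {v₃,s}, {s,v₄}, {v₄,t}`:
(i) some edge-disjoint pair of paths `P : s → w`, `Q : w → t` has total length `6`;
(ii) every edge-disjoint pair has total length at least `6`;
(iii) the unique shortest `s`–`w` path is `s, u, w` of length `2`, every `w`–`t` path
edge-disjoint from it has length at least `6`, and hence every edge-disjoint pair in
which `P` is a shortest `s`–`w` path has total length at least `8`. -/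
theorem greedy_waypoint_routing_suboptimal {V : Type*} [DecidableEq V]
    (G : SimpleGraph V) (s u w t v₁ v₂ v₃ v₄ : V)
    (hnodup : ([s, u, w, t, v₁, v₂, v₃, v₄] : List V).Nodup)
    (hAdj : ∀ a b : V, G.Adj a b ↔ s(a, b) ∈
      [s(s, u), s(u, w), s(u, t), s(v₃, v₂), s(v₂, v₁), s(v₁, w),
       s(v₃, s), s(s, v₄), s(v₄, t)]) :
    (∃ (P : G.Walk s w) (Q : G.Walk w t), P.IsPath ∧ Q.IsPath ∧
        List.Disjoint P.edges Q.edges ∧ P.length + Q.length = 6) ∧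
    (∀ (P : G.Walk s w) (Q : G.Walk w t), P.IsPath → Q.IsPath →
        List.Disjoint P.edges Q.edges → 6 ≤ P.length + Q.length) ∧
    ((∃ P : G.Walk s w, P.IsPath ∧ P.length = 2 ∧ P.support = [s, u, w]) ∧
     (∀ P : G.Walk s w, P.IsPath → P.length ≤ 2 → P.support = [s, u, w]) ∧
     (∀ Q : G.Walk w t, Q.IsPath →
        List.Disjoint Q.edges [s(s, u), s(u, w)] → 6 ≤ Q.length) ∧
     (∀ (P : G.Walk s w) (Q : G.Walk w t), P.IsPath → Q.IsPath →
        List.Disjoint P.edges Q.edges →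
        (∀ P' : G.Walk s w, P'.IsPath → P.length ≤ P'.length) →
        8 ≤ P.length + Q.length)) := by
  have hnd := hnodup
  simp only [List.nodup_cons, List.mem_cons, List.not_mem_nil, or_false, not_or,
    not_false_eq_true, List.nodup_nil, and_true] at hnd
  obtain ⟨⟨h1, h2, h3, h4, h5, h6, h7⟩, ⟨h8, h9, h10, h11, h12, h13⟩,
    ⟨h14, h15, h16, h17, h18⟩, ⟨h19, h20, h21, h22⟩, ⟨h23, h24, h25⟩, ⟨h26, h27⟩, h28⟩ := hnd
  clear hnodup
  have asu : G.Adj s u := by rw [hAdj]; simp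
  have auw : G.Adj u w := by rw [hAdj]; simp
  have aut : G.Adj u t := by rw [hAdj]; simp
  have a32 : G.Adj v₃ v₂ := by rw [hAdj]; simp
  have a21 : G.Adj v₂ v₁ := by rw [hAdj]; simp
  have a1w : G.Adj v₁ w := by rw [hAdj]; simp
  have a3s : G.Adj v₃ s := by rw [hAdj]; simp
  have C : ∀ Q : G.Walk w t, List.Disjoint Q.edges [s(s, u), s(u, w)] → 6 ≤ Q.length := by
    intro Q hQ
    have := walk_pot (fun x => if x = v₁ then 1 else if x = v₂ then 2 else if x = v₃ then 3 else if x = s then 4 else if x = v₄ then 5 else if x = t then 6 else if x = u then 7 else 0) (fun e => e = s(s, u) ∨ e = s(u, w))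
      (by
        intro a b hab hB
        rw [hAdj] at hab
        simp only [List.mem_cons, List.not_mem_nil, or_false, Sym2.eq_iff] at hab
        rcases hab with h | h | h | h | h | h | h | h | h <;>
          rcases h with ⟨rfl, rfl⟩ | ⟨rfl, rfl⟩ <;> simp_all [eq_comm, Sym2.eq_swap]) Q
      (by
        intro e he h
        exact hQ he (by simpa using h))
    grind
  have A1 : ∀ P : G.Walk s w, P.length ≤ 3 → s(s, u) ∈ P.edges := by
    intro P hP
    by_contra hc
    have := walk_pot (fun x => if x = v₃ then 1 else if x = v₄ then 1 else if x = v₂ then 2 else if x = t then 2 else if x = v₁ then 3 else if x = u then 3 else if x = w then 4 else 0) (fun e => e = s(s, u))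
      (by
        intro a b hab hB
        rw [hAdj] at hab
        simp only [List.mem_cons, List.not_mem_nil, or_false, Sym2.eq_iff] at hab
        rcases hab with h | h | h | h | h | h | h | h | h <;>
          rcases h with ⟨rfl, rfl⟩ | ⟨rfl, rfl⟩ <;> simp_all [eq_comm, Sym2.eq_swap]) P
      (by
        rintro e he rfl
        exact hc he)
    grind
  have A2 : ∀ P : G.Walk s w, P.length ≤ 3 → s(u, w) ∈ P.edges := by
    intro P hP
    by_contra hc
    have := walk_pot (fun x => if x = u then 1 else if x = v₃ then 1 else if x = v₄ then 1 else if x = v₂ then 2 else if x = t then 2 else if x = v₁ then 3 else if x = w then 4 else 0) (fun e => e = s(u, w))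
      (by
        intro a b hab hB
        rw [hAdj] at hab
        simp only [List.mem_cons, List.not_mem_nil, or_false, Sym2.eq_iff] at hab
        rcases hab with h | h | h | h | h | h | h | h | h <;>
          rcases h with ⟨rfl, rfl⟩ | ⟨rfl, rfl⟩ <;> simp_all [eq_comm, Sym2.eq_swap]) P
      (by
        rintro e he rfl
        exact hc he)
    grind
  have A : ∀ (P : G.Walk s w) (Q : G.Walk w t), List.Disjoint P.edges Q.edges →
      P.length ≤ 3 → 6 ≤ Q.length := by
    intro P Q hd hP
    apply C
    intro e he h
    simp only [List.mem_cons, List.not_mem_nil, or_false] at h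
    rcases h with rfl | rfl
    · exact hd (A1 P hP) he
    · exact hd (A2 P hP) he
  have nsw : ¬ G.Adj s w := by
    rw [hAdj]; simp only [List.mem_cons, List.not_mem_nil, or_false, Sym2.eq_iff]; grind
  have nwt : ¬ G.Adj w t := by
    rw [hAdj]; simp only [List.mem_cons, List.not_mem_nil, or_false, Sym2.eq_iff]; grind
  have L : ∀ {a b : V} (P : G.Walk a b), a ≠ b → ¬ G.Adj a b → 2 ≤ P.length := by
    intro a b P hab hn
    match P with
    | .nil => exact absurd rfl hab
    | .cons h .nil => exact absurd h hn
    | .cons h (.cons h' p) => simp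
  refine ⟨⟨.cons a3s.symm (.cons a32 (.cons a21 (.cons a1w .nil))),
      .cons auw.symm (.cons aut .nil), ?_, ?_, ?_, rfl⟩, ?_,
      ⟨.cons asu (.cons auw .nil), ?_, rfl, rfl⟩, ?_, fun Q _ h => C Q h, ?_⟩
  · simp [SimpleGraph.Walk.cons_isPath_iff]; grind
  · simp [SimpleGraph.Walk.cons_isPath_iff]; grind
  · simp [List.disjoint_left]; grind
  · intro P Q _ _ hd
    have := L Q h14 nwt
    by_cases hP : P.length ≤ 3
    · have := A P Q hd hP
      omega
    · omega
  · simp [SimpleGraph.Walk.cons_isPath_iff]; grind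
  · intro P _ hl
    have e1 := A1 P (by omega)
    match P, hl, e1 with
    | .nil, _, e1 => simp at e1
    | .cons h .nil, _, e1 => exact absurd h nsw
    | .cons h (.cons h' .nil), _, e1 =>
      simp at e1 ⊢
      grind
    | .cons h (.cons h' (.cons h'' p)), hl, _ =>
      simp at hl
  · intro P Q _ _ hd hs
    have hP := hs (.cons asu (.cons auw .nil)) (by
      simp [SimpleGraph.Walk.cons_isPath_iff]; grind)
    simp only [SimpleGraph.Walk.length_cons, SimpleGraph.Walk.length_nil] at hP
    have := A P Q hd (by omega)
    have := L P h2 nsw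
    omega
end
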